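/- Let P be a finite set with a partial order <, and let <' and <'' be two partial orders on P, each weaker than < (p <' q implies p < q, and p <'' q implies p < q), such that 𝒥 is closed under both *_{<'} and *_{<''}, and let P* ⊆ P contain all <-minimal and <-maximal elements with no p ∈ P* satisfying p <' q or p <'' q for any q ∈ P. Let λ ∈ ℤ^{P*} be a nonnegative dominant marking. Then for every integer m ≥ 0, the sets ℤ^P ∩ m·R_λ(P,<,<') and ℤ^P ∩ m·R_λ(P,<,<'') have the same cardinality. -/

import Mathlib

open Pointwise

/-- `J` is an order ideal (lower set) with respect to the strict order relation `r`. -/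
def IsLowerIdeal {P : Type*} (r : P → P → Prop) (J : Set P) : Prop :=
  ∀ ⦃p q : P⦄, r p q → q ∈ J → p ∈ J

/-- The set of `r`-maximal elements of `J`. -/
def maxElems {P : Type*} (r : P → P → Prop) (J : Set P) : Set P :=
  {p ∈ J | ∀ q ∈ J, ¬ r p q}

/-- The 0/1 indicator vector of `A ⊆ P`, as a point of `ℝ^P`. -/
noncomputable def ind {P : Type*} (A : Set P) : P → ℝ :=
  A.indicator 1

/-- The order ideal of `(P, r)` generated by `A`. -/
def genIdeal {P : Type*} (r : P → P → Prop) (A : Set P) : Set P :=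
  {p | ∃ q ∈ A, p = q ∨ r p q}

/-- The Hibi–Li operation `J1 *' J2` relative to the order `r`: the order ideal of `(P, r)`
generated by `(J1 ∩ J2) ∩ (max_r J1 ∪ max_r J2)`. -/
def starOp {P : Type*} (r : P → P → Prop) (J1 J2 : Set P) : Set P :=
  genIdeal r ((J1 ∩ J2) ∩ (maxElems r J1 ∪ maxElems r J2))

/-- The relative poset polytope `R(P, lt, lt')`: the convex hull of the points
`1_{max_{lt'} J}` over all order ideals `J` of `(P, lt)`. -/
noncomputable def RPP {P : Type*} (lt lt' : P → P → Prop) : Set (P → ℝ) :=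
  convexHull ℝ {x | ∃ J : Set P, IsLowerIdeal lt J ∧ x = ind (maxElems lt' J)}

/-- The dilation `m·Q = {m·x : x ∈ Q}`. -/
def dilate {P : Type*} (m : ℕ) (Q : Set (P → ℝ)) : Set (P → ℝ) :=
  (fun x => (m : ℝ) • x) '' Q

/-- The order polytope of `(P, lt)`. -/
def orderPolytope {P : Type*} (lt : P → P → Prop) : Set (P → ℝ) :=
  {x | (∀ p, 0 ≤ x p ∧ x p ≤ 1) ∧ ∀ p q, lt q p → x p ≤ x q}

/-- The chain polytope of `(P, lt)`. -/
def chainPolytope {P : Type*} (lt : P → P → Prop) : Set (P → ℝ) :=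
  {x | (∀ p, 0 ≤ x p) ∧ ∀ (k : ℕ) (c : Fin k → P),
    (∀ i j : Fin k, i < j → lt (c i) (c j)) → (∑ i, x (c i)) ≤ 1}


/-- The fundamental marked relative poset polytope `R_{ω_K}(P, lt, lt')`: the convex hull
of the points `1_{max_{lt'} J}` over order ideals `J` of `(P, lt)` with `J ∩ P* = K`. -/
noncomputable def RPPfund {P : Type*} (lt lt' : P → P → Prop) (Pstar K : Set P) :
    Set (P → ℝ) :=
  convexHull ℝ
    {x | ∃ J : Set P, IsLowerIdeal lt J ∧ J ∩ Pstar = K ∧ x = ind (maxElems lt' J)}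

/-- The set `𝒥*` of order ideals of the subposet `(P*, lt)`. -/
def idealsOn {P : Type*} (lt : P → P → Prop) (Pstar : Set P) : Set (Set P) :=
  {K | K ⊆ Pstar ∧ ∀ p q : P, p ∈ Pstar → q ∈ Pstar → lt p q → q ∈ K → p ∈ K}

/-- The marked relative poset polytope for a coefficient function `α : 𝒥* → ℕ`:
the Minkowski sum `Σ_{K ∈ 𝒥*} α_K · R_{ω_K}(P, lt, lt')`. -/
noncomputable def RPPmarked {P : Type*} [Fintype P] (lt lt' : P → P → Prop)
    (Pstar : Set P) (α : Set P → ℕ) : Set (P → ℝ) :=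
  ∑ K ∈ (Set.toFinite (idealsOn lt Pstar)).toFinset, dilate (α K) (RPPfund lt lt' Pstar K)


open Classical in
/-- Feasible coefficient vectors expressing `x`. -/
def Feas {P : Type*} [Fintype P] (lt r : P → P → Prop) (Pstar : Set P) (N : Set P → ℝ)
    (x : P → ℝ) : Set (Set P → ℝ) :=
  {c | (∀ J, 0 ≤ c J) ∧ (∀ J, ¬ IsLowerIdeal lt J → c J = 0) ∧
    (∀ K, ∑ J, c J * (if J ∩ Pstar = K then 1 else 0) = N K) ∧
    ∀ p, ∑ J, c J * ind (maxElems r J) p = x p}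

theorem exists_max_above {P : Type*} [Fintype P] (r : P → P → Prop)
    (hirr : ∀ p, ¬ r p p) (htr : ∀ a b c, r a b → r b c → r a c) (J : Set P) (q : P)
    (hq : q ∈ J) : ∃ p ∈ maxElems r J, q = p ∨ r q p := by
  have : IsTrans P (fun a b => r b a) := ⟨fun a b c h1 h2 => htr _ _ _ h2 h1⟩
  have : Std.Irrefl (fun a b => r b a) := ⟨fun a => hirr a⟩
  have wf : WellFounded (fun a b => r b a) := Finite.wellFounded_of_trans_of_irrefl _
  obtain ⟨p, ⟨hpJ, hqp⟩, hp⟩ := wf.has_min {p ∈ J | q = p ∨ r q p} ⟨q, hq, Or.inl rfl⟩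
  refine ⟨p, ⟨hpJ, fun s hs hps => hp s ⟨hs, Or.inr ?_⟩ hps⟩, hqp⟩
  rcases hqp with h | h
  · rw [h]; exact hps
  · exact htr _ _ _ h hps

theorem ind_nonneg' {P : Type*} (A : Set P) (p : P) : 0 ≤ ind A p := by
  unfold ind; exact Set.indicator_nonneg (by simp) _

theorem max_star {P : Type*} (r : P → P → Prop)
    (hirr : ∀ p, ¬ r p p) (htr : ∀ a b c, r a b → r b c → r a c) (J1 J2 : Set P) :
    maxElems r (starOp r J1 J2) = (J1 ∩ J2) ∩ (maxElems r J1 ∪ maxElems r J2) := by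
  have hsub : ∀ p ∈ (J1 ∩ J2) ∩ (maxElems r J1 ∪ maxElems r J2), ∀ q ∈ J1 ∩ J2, ¬ r p q := by
    rintro p ⟨_, h | h⟩ q hq
    · exact h.2 q hq.1
    · exact h.2 q hq.2
  ext p
  constructor
  · rintro ⟨⟨q, hq, h | h⟩, hmax⟩
    · rw [h]; exact hq
    · exact absurd h (hmax q ⟨q, hq, Or.inl rfl⟩)
  · intro hp
    refine ⟨⟨p, hp, Or.inl rfl⟩, ?_⟩
    rintro q ⟨s, hs, rfl | h⟩ hpq
    · exact hsub p hp _ hs.1 hpq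
    · exact hsub p hp _ hs.1 (htr _ _ _ hpq h)

theorem starOp_sub {P : Type*} (r : P → P → Prop) (J1 J2 : Set P) (h1 : IsLowerIdeal r J1)
    (h2 : IsLowerIdeal r J2) : starOp r J1 J2 ⊆ J1 ∩ J2 := by
  rintro p ⟨q, hq, rfl | h⟩
  · exact hq.1
  · exact ⟨h1 h hq.1.1, h2 h hq.1.2⟩

theorem max_union {P : Type*} (r : P → P → Prop) (J1 J2 : Set P) (p : P) :
    p ∈ maxElems r (J1 ∪ J2) ↔ (p ∈ J1 ∨ p ∈ J2) ∧ (∀ q ∈ J1, ¬ r p q) ∧ ∀ q ∈ J2, ¬ r p q := by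
  simp only [maxElems, Set.mem_sep_iff, Set.mem_union]
  constructor
  · rintro ⟨h, h'⟩; exact ⟨h, fun q hq => h' q (Or.inl hq), fun q hq => h' q (Or.inr hq)⟩
  · rintro ⟨h, h1, h2⟩; exact ⟨h, fun q hq => hq.elim (h1 q) (h2 q)⟩

theorem straighten {P : Type*} (r : P → P → Prop)
    (hirr : ∀ p, ¬ r p p) (htr : ∀ a b c, r a b → r b c → r a c) (J1 J2 : Set P)
    (h1 : IsLowerIdeal r J1) (h2 : IsLowerIdeal r J2) (p : P) :
    ind (maxElems r (J1 ∪ J2)) p + ind (maxElems r (starOp r J1 J2)) p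
      = ind (maxElems r J1) p + ind (maxElems r J2) p := by
  classical
  rw [max_star r hirr htr]
  unfold ind
  simp only [Set.indicator_apply, max_union, Set.mem_inter_iff, Set.mem_union, Pi.one_apply]
  have e1 : p ∈ maxElems r J1 ↔ p ∈ J1 ∧ ∀ q ∈ J1, ¬ r p q := Iff.rfl
  have e2 : p ∈ maxElems r J2 ↔ p ∈ J2 ∧ ∀ q ∈ J2, ¬ r p q := Iff.rfl
  have f1 : p ∉ J1 → ∀ q ∈ J1, ¬ r p q := fun h q hq hr => h (h1 hr hq)
  have f2 : p ∉ J2 → ∀ q ∈ J2, ¬ r p q := fun h q hq hr => h (h2 hr hq)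
  rw [e1, e2]
  generalize (∀ q ∈ J1, ¬ r p q) = A at *
  generalize (∀ q ∈ J2, ¬ r p q) = B at *
  by_cases a : p ∈ J1 <;> by_cases b : p ∈ J2 <;> by_cases c : A <;> by_cases d : B <;>
    simp_all

theorem sum_shift {P : Type*} [Fintype P] [DecidableEq (Set P)] (c f : Set P → ℝ) (ε : ℝ)
    (U S J1 J2 : Set P) :
    ∑ J, (c J + ε * (Pi.single (M := fun _ => ℝ) U 1 J + Pi.single (M := fun _ => ℝ) S 1 J
      - Pi.single (M := fun _ => ℝ) J1 1 J - Pi.single (M := fun _ => ℝ) J2 1 J)) * f J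
    = ∑ J, c J * f J + ε * (f U + f S - f J1 - f J2) := by
  simp only [add_mul, mul_assoc, sub_mul, Finset.sum_add_distrib, ← Finset.mul_sum,
    Finset.sum_sub_distrib, Pi.single_apply, ite_mul, one_mul, zero_mul, Finset.sum_ite_eq',
    Finset.mem_univ, if_true]

theorem feas_compact {P : Type*} [Fintype P] (lt r : P → P → Prop) (Pstar : Set P)
    (N : Set P → ℝ) (x : P → ℝ) : IsCompact (Feas lt r Pstar N x) := by
  classical
  have hcl : IsClosed (Feas lt r Pstar N x) := by
    unfold Feas
    simp only [Set.ofPred_and, Set.ofPred_forall]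
    refine IsClosed.inter ?_ (IsClosed.inter ?_ (IsClosed.inter ?_ ?_))
    · exact isClosed_iInter fun J => isClosed_le (by fun_prop) (by fun_prop)
    · exact isClosed_iInter fun J => isClosed_iInter fun _ =>
        isClosed_eq (by fun_prop) (by fun_prop)
    · exact isClosed_iInter fun J => isClosed_eq (by fun_prop) (by fun_prop)
    · exact isClosed_iInter fun J => isClosed_eq (by fun_prop) (by fun_prop)
  refine IsCompact.of_isClosed_subset
    (isCompact_Icc (a := (0 : Set P → ℝ)) (b := fun J => N (J ∩ Pstar))) hcl ?_
  rintro c ⟨h0, _, hN, _⟩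
  refine ⟨h0, fun J => ?_⟩
  show c J ≤ N (J ∩ Pstar)
  rw [← hN]
  have := Finset.single_le_sum
    (f := fun J' => c J' * (if J' ∩ Pstar = J ∩ Pstar then (1:ℝ) else 0))
    (fun J' _ => by have := h0 J'; split_ifs <;> simp [this]) (Finset.mem_univ J)
  simpa using this

theorem feas_chain {P : Type*} [Fintype P] (lt r : P → P → Prop)
    (hirr : ∀ p, ¬ r p p) (htr : ∀ a b c, r a b → r b c → r a c)
    (hweak : ∀ p q, r p q → lt p q)
    (hstar : ∀ J1 J2 : Set P, IsLowerIdeal lt J1 → IsLowerIdeal lt J2 →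
      IsLowerIdeal lt (starOp r J1 J2))
    (Pstar : Set P) (hiii : ∀ p ∈ Pstar, ∀ q : P, ¬ r p q)
    (N : Set P → ℝ) (hN : ∀ K1 K2 : Set P, N K1 ≠ 0 → N K2 ≠ 0 → K1 ⊆ K2 ∨ K2 ⊆ K1)
    (x : P → ℝ) (hne : (Feas lt r Pstar N x).Nonempty) :
    ∃ c ∈ Feas lt r Pstar N x, ∀ J1 J2, c J1 ≠ 0 → c J2 ≠ 0 → J1 ⊆ J2 ∨ J2 ⊆ J1 := by
  classical
  obtain ⟨c, hc, hmax⟩ := (feas_compact lt r Pstar N x).exists_isMaxOn hne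
    (f := fun c => ∑ J, c J * (2:ℝ) ^ J.ncard) (by fun_prop)
  refine ⟨c, hc, ?_⟩
  obtain ⟨h0, hlow, hK, hx⟩ := hc
  have hNne : ∀ J, c J ≠ 0 → N (J ∩ Pstar) ≠ 0 := by
    intro J hJ h
    rw [← hK] at h
    rw [Finset.sum_eq_zero_iff_of_nonneg
      (fun J' _ => by have := h0 J'; split_ifs <;> simp [this])] at h
    simpa [hJ] using h J (Finset.mem_univ J)
  intro J1 J2 hJ1 hJ2
  by_contra hcon
  push Not at hcon
  obtain ⟨n12, n21⟩ := hcon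
  have l1 : IsLowerIdeal lt J1 := by by_contra h; exact hJ1 (hlow _ h)
  have l2 : IsLowerIdeal lt J2 := by by_contra h; exact hJ2 (hlow _ h)
  have l1' : IsLowerIdeal r J1 := fun p q h hq => l1 (hweak _ _ h) hq
  have l2' : IsLowerIdeal r J2 := fun p q h hq => l2 (hweak _ _ h) hq
  set U := J1 ∪ J2 with hU
  set S := starOp r J1 J2 with hS
  have lU : IsLowerIdeal lt U := fun p q h hq => hq.elim (fun h' => Or.inl (l1 h h'))
    (fun h' => Or.inr (l2 h h'))
  have lS : IsLowerIdeal lt S := hstar _ _ l1 l2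
  have p1 : 0 < c J1 := lt_of_le_of_ne (h0 _) (Ne.symm hJ1)
  have p2 : 0 < c J2 := lt_of_le_of_ne (h0 _) (Ne.symm hJ2)
  obtain ⟨ε, hε, e1, e2⟩ : ∃ ε : ℝ, 0 < ε ∧ ε ≤ c J1 ∧ ε ≤ c J2 :=
    ⟨min (c J1) (c J2), lt_min p1 p2, min_le_left _ _, min_le_right _ _⟩
  have hSK : S ∩ Pstar = (J1 ∩ J2) ∩ Pstar := by
    ext p
    constructor
    · rintro ⟨h, h'⟩; exact ⟨starOp_sub r J1 J2 l1' l2' h, h'⟩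
    · rintro ⟨h, h'⟩
      exact ⟨⟨p, ⟨h, Or.inl ⟨h.1, fun q _ => hiii p h' q⟩⟩, Or.inl rfl⟩, h'⟩
  have hKsum : ∀ K, (if U ∩ Pstar = K then (1:ℝ) else 0) + (if S ∩ Pstar = K then 1 else 0)
      - (if J1 ∩ Pstar = K then 1 else 0) - (if J2 ∩ Pstar = K then 1 else 0) = 0 := by
    intro K
    have hUK : U ∩ Pstar = (J1 ∩ Pstar) ∪ (J2 ∩ Pstar) := Set.union_inter_distrib_right _ _ _
    have hSK' : S ∩ Pstar = (J1 ∩ Pstar) ∩ (J2 ∩ Pstar) := by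
      rw [hSK]; ext p; simp only [Set.mem_inter_iff]; tauto
    rcases hN _ _ (hNne _ hJ1) (hNne _ hJ2) with h | h
    · rw [hUK, hSK', Set.union_eq_right.2 h, Set.inter_eq_left.2 h]; ring
    · rw [hUK, hSK', Set.union_eq_left.2 h, Set.inter_eq_right.2 h]; ring
  have n : J1 ≠ J2 := fun h => n12 (h ▸ subset_rfl)
  have := hmax (show (fun J => c J + ε * (Pi.single (M := fun _ => ℝ) U 1 J
      + Pi.single (M := fun _ => ℝ) S 1 J
      - Pi.single (M := fun _ => ℝ) J1 1 J - Pi.single (M := fun _ => ℝ) J2 1 J)) ∈ _ from ?_)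
  · simp only [Set.mem_setOf_eq, sum_shift] at this
    have hpos : 0 < (2:ℝ) ^ U.ncard + 2 ^ S.ncard - 2 ^ J1.ncard - 2 ^ J2.ncard := by
      have a1 : J1.ncard < U.ncard := Set.ncard_lt_ncard
        ⟨Set.subset_union_left, fun h => n21 (Set.subset_union_right.trans h)⟩
      have a2 : J2.ncard < U.ncard := Set.ncard_lt_ncard
        ⟨Set.subset_union_right, fun h => n12 (Set.subset_union_left.trans h)⟩
      have b1 : (2:ℝ) ^ (J1.ncard + 1) ≤ 2 ^ U.ncard := pow_le_pow_right₀ (by norm_num) a1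
      have b2 : (2:ℝ) ^ (J2.ncard + 1) ≤ 2 ^ U.ncard := pow_le_pow_right₀ (by norm_num) a2
      have b3 : (0:ℝ) < 2 ^ S.ncard := by positivity
      rw [pow_succ] at b1 b2
      linarith
    have := mul_pos hε hpos
    linarith
  · refine ⟨fun J => ?_, fun J hJ => ?_, fun K => ?_, fun p => ?_⟩
    · have := h0 J
      have s : ∀ A : Set P, 0 ≤ ε * Pi.single (M := fun _ => ℝ) A 1 J := fun A => by
        rw [Pi.single_apply]; split_ifs <;> simp [hε.le]
      have sU := s U
      have sS := s S
      have t : ε * Pi.single (M := fun _ => ℝ) J1 1 J + ε * Pi.single (M := fun _ => ℝ) J2 1 J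
          ≤ c J := by
        simp only [Pi.single_apply]
        by_cases g1 : J = J1
        · subst g1; simp [n, e1]
        · by_cases g2 : J = J2
          · subst g2; simp [n.symm, e2]
          · simp [g1, g2, this]
      simp only [mul_add, mul_sub]
      linarith
    · have g : ∀ A : Set P, IsLowerIdeal lt A → Pi.single (M := fun _ => ℝ) A 1 J = 0 := by
        intro A hA
        rw [Pi.single_apply, if_neg]; rintro rfl; exact hJ hA
      simp [hlow J hJ, g _ lU, g _ lS, g _ l1, g _ l2]
    · rw [sum_shift, hK, hKsum]; ring
    · rw [sum_shift c (fun J => ind (maxElems r J) p), hx]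
      have := straighten r hirr htr J1 J2 l1' l2' p
      rw [this]; ring

theorem chain_int {P : Type*} [Fintype P] (r : P → P → Prop)
    (hirr : ∀ p, ¬ r p p) (htr : ∀ a b c, r a b → r b c → r a c)
    (c : Set P → ℝ) (hlow : ∀ J, c J ≠ 0 → IsLowerIdeal r J ∧ J.Nonempty)
    (hch : ∀ J1 J2, c J1 ≠ 0 → c J2 ≠ 0 → J1 ⊆ J2 ∨ J2 ⊆ J1)
    (x : P → ℤ) (hx : ∀ p, ∑ J, c J * ind (maxElems r J) p = x p) (J : Set P) :
    ∃ z : ℤ, c J = z := by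
  classical
  by_contra hJ
  obtain ⟨J, hJ, hJmax⟩ : ∃ J, (¬ ∃ z : ℤ, c J = z) ∧ ∀ J', J ⊂ J' → ∃ z : ℤ, c J' = z := by
    obtain ⟨M, hM⟩ := (Set.toFinite {J | ¬ ∃ z : ℤ, c J = z}).exists_maximal ⟨J, hJ⟩
    refine ⟨M, hM.prop, fun J' h => ?_⟩
    by_contra h'
    exact hM.not_prop_of_gt h h'
  have hJ0 : c J ≠ 0 := fun h => hJ ⟨0, by simp [h]⟩
  obtain ⟨hJl, hJn⟩ := hlow J hJ0
  obtain ⟨p, hpJ, hp⟩ : ∃ p ∈ J, ∀ J', c J' ≠ 0 → J' ⊂ J → p ∉ J' := by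
    by_cases hS : {J' | c J' ≠ 0 ∧ J' ⊂ J}.Nonempty
    · obtain ⟨M, hM⟩ := (Set.toFinite {J' | c J' ≠ 0 ∧ J' ⊂ J}).exists_maximal hS
      obtain ⟨p, hpJ, hpM⟩ := Set.exists_of_ssubset hM.prop.2
      refine ⟨p, hpJ, fun J' h1 h2 h3 => hpM ?_⟩
      rcases hch J' M h1 hM.prop.1 with h | h
      · exact h h3
      · exact hM.le_of_ge ⟨h1, h2⟩ h h3
    · obtain ⟨p, hpJ⟩ := hJn
      exact ⟨p, hpJ, fun J' h1 h2 => absurd ⟨J', h1, h2⟩ hS⟩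
  obtain ⟨q, hq, hpq⟩ := exists_max_above r hirr htr J p hpJ
  have hq' : ∀ J', c J' ≠ 0 → J' ⊂ J → q ∉ J' := by
    intro J' h1 h2 h3
    rcases hpq with rfl | h
    · exact hp J' h1 h2 h3
    · exact hp J' h1 h2 ((hlow J' h1).1 h h3)
  have hxq := hx q
  rw [← Finset.add_sum_erase _ _ (Finset.mem_univ J)] at hxq
  have h1 : ind (maxElems r J) q = 1 := by simp [ind, hq]
  have h2 : ∀ J' ∈ Finset.univ.erase J, ∃ z : ℤ, c J' * ind (maxElems r J') q = z := by
    intro J' hJ'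
    have hne := Finset.ne_of_mem_erase hJ'
    by_cases h0 : c J' = 0
    · exact ⟨0, by simp [h0]⟩
    · rcases hch J' J h0 hJ0 with h | h
      · have : q ∉ maxElems r J' := fun h' => hq' J' h0 (h.ssubset_of_ne hne) h'.1
        exact ⟨0, by simp [ind, this]⟩
      · obtain ⟨z, hz⟩ := hJmax J' (h.ssubset_of_ne hne.symm)
        by_cases hm : q ∈ maxElems r J'
        · exact ⟨z, by simp [ind, hm, hz]⟩
        · exact ⟨0, by simp [ind, hm]⟩
  choose! z hz using h2
  rw [h1, Finset.sum_congr rfl hz] at hxq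
  exact hJ ⟨x q - ∑ J' ∈ Finset.univ.erase J, z J', by push_cast; linarith⟩

theorem chain_top {P : Type*} [Fintype P] (r : P → P → Prop)
    (hirr : ∀ p, ¬ r p p) (htr : ∀ a b c, r a b → r b c → r a c)
    (c : Set P → ℕ) (hlow : ∀ J, c J ≠ 0 → IsLowerIdeal r J ∧ J.Nonempty)
    (hch : ∀ J1 J2, c J1 ≠ 0 → c J2 ≠ 0 → J1 ⊆ J2 ∨ J2 ⊆ J1) (hc : c ≠ 0) :
    c (genIdeal r {q | ∑ J, (c J : ℝ) * ind (maxElems r J) q ≠ 0}) ≠ 0 := by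
  classical
  obtain ⟨J0, hJ0⟩ : ∃ J, c J ≠ 0 := by
    by_contra h; push Not at h; exact hc (funext h)
  obtain ⟨M, hM⟩ := (Set.toFinite {J | c J ≠ 0}).exists_maximal ⟨J0, hJ0⟩
  have htop : ∀ J, c J ≠ 0 → J ⊆ M := fun J h => (hch J M h hM.prop).elim id
    (fun h' => hM.le_of_ge h h')
  have hpos : ∀ q, ∀ J ∈ Finset.univ, 0 ≤ (c J : ℝ) * ind (maxElems r J) q :=
    fun q J _ => mul_nonneg (by positivity) (ind_nonneg' _ _)
  have : genIdeal r {q | ∑ J, (c J : ℝ) * ind (maxElems r J) q ≠ 0} = M := by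
    ext p
    constructor
    · rintro ⟨q, hq, h⟩
      obtain ⟨J, _, hJ⟩ := Finset.exists_ne_zero_of_sum_ne_zero hq
      have hcJ : c J ≠ 0 := fun h => hJ (by simp [h])
      have hqm : q ∈ maxElems r J := by
        by_contra h; exact hJ (by simp [ind, h])
      have hqM := htop J hcJ hqm.1
      rcases h with rfl | h
      · exact hqM
      · exact (hlow M hM.prop).1 h hqM
    · intro hp
      obtain ⟨q, hq, h⟩ := exists_max_above r hirr htr M p hp
      refine ⟨q, ?_, h⟩
      intro h0
      rw [Finset.sum_eq_zero_iff_of_nonneg (hpos q)] at h0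
      have := h0 M (Finset.mem_univ _)
      have hMp := hM.prop
      simp only [Set.mem_setOf_eq] at hMp
      simp [ind, hq, hMp] at this
  rw [this]; exact hM.prop

theorem chain_unique {P : Type*} [Fintype P] (r : P → P → Prop)
    (hirr : ∀ p, ¬ r p p) (htr : ∀ a b c, r a b → r b c → r a c) (N : ℕ) :
    ∀ (c d : Set P → ℕ) (_ : ∑ J, c J = N)
    (_ : ∀ J, c J ≠ 0 → IsLowerIdeal r J ∧ J.Nonempty)
    (_ : ∀ J1 J2, c J1 ≠ 0 → c J2 ≠ 0 → J1 ⊆ J2 ∨ J2 ⊆ J1)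
    (_ : ∀ J, d J ≠ 0 → IsLowerIdeal r J ∧ J.Nonempty)
    (_ : ∀ J1 J2, d J1 ≠ 0 → d J2 ≠ 0 → J1 ⊆ J2 ∨ J2 ⊆ J1)
    (_ : ∀ p, ∑ J, (c J : ℝ) * ind (maxElems r J) p = ∑ J, (d J : ℝ) * ind (maxElems r J) p),
    c = d := by
  classical
  -- a nonzero chain has a nonzero sum
  have key : ∀ c : Set P → ℕ, (∀ J, c J ≠ 0 → IsLowerIdeal r J ∧ J.Nonempty) →
      (∀ J1 J2, c J1 ≠ 0 → c J2 ≠ 0 → J1 ⊆ J2 ∨ J2 ⊆ J1) →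
      (∀ p, ∑ J, (c J : ℝ) * ind (maxElems r J) p = 0) → c = 0 := by
    intro c h1 h2 h3
    by_contra hc
    have h4 := chain_top r hirr htr c h1 h2 hc
    obtain ⟨p, q, hq, _⟩ := (h1 _ h4).2
    exact hq (h3 q)
  induction N with
  | zero =>
    intro c d hN c1 c2 d1 d2 hcd
    have hc : c = 0 := by
      funext J
      simpa using (Finset.sum_eq_zero_iff.1 hN) J (Finset.mem_univ J)
    subst hc
    exact (key d d1 d2 (fun p => by rw [← hcd]; simp)).symm
  | succ N ih =>
    intro c d hN c1 c2 d1 d2 hcd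
    have hc : c ≠ 0 := by rintro rfl; simp at hN
    have hd : d ≠ 0 := by
      rintro rfl
      exact hc (key c c1 c2 (fun p => by rw [hcd]; simp))
    have tc := chain_top r hirr htr c c1 c2 hc
    have td := chain_top r hirr htr d d1 d2 hd
    simp only [hcd] at tc
    generalize genIdeal r {q | ∑ J, (d J : ℝ) * ind (maxElems r J) q ≠ 0} = T at tc td
    have dec : ∀ c : Set P → ℕ, c T ≠ 0 → ∃ c' : Set P → ℕ, c = c' + Pi.single T 1 := by
      intro c h
      refine ⟨c - Pi.single T 1, ?_⟩
      funext J
      by_cases hJ : J = T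
      · subst hJ; simp; omega
      · simp [hJ]
    obtain ⟨c', rfl⟩ := dec c tc
    obtain ⟨d', rfl⟩ := dec d td
    have ne : ∀ c' : Set P → ℕ, ∀ J, c' J ≠ 0 → (c' + Pi.single T 1 : Set P → ℕ) J ≠ 0 := by
      intro c' J h; simp [h]
    rw [ih c' d' ?_ (fun J h => c1 J (ne _ _ h)) (fun J J' h h' => c2 J J' (ne _ _ h) (ne _ _ h'))
      (fun J h => d1 J (ne _ _ h)) (fun J J' h h' => d2 J J' (ne _ _ h) (ne _ _ h')) ?_]
    · simp only [Pi.add_apply, Finset.sum_add_distrib] at hN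
      rw [Finset.sum_pi_single' T 1 Finset.univ] at hN
      simpa using hN
    · intro p
      have := hcd p
      simpa [add_mul, Finset.sum_add_distrib] using this

theorem fund_mem {P : Type*} [Fintype P] (lt r : P → P → Prop) (Pstar K : Set P) (x : P → ℝ)
    (hx : x ∈ RPPfund lt r Pstar K) :
    ∃ c : Set P → ℝ, (∀ J, 0 ≤ c J) ∧ (∀ J, c J ≠ 0 → IsLowerIdeal lt J ∧ J ∩ Pstar = K) ∧
      ∑ J, c J = 1 ∧ ∀ p, ∑ J, c J * ind (maxElems r J) p = x p := by
  classical
  have hsub : RPPfund lt r Pstar K ⊆ {x | ∃ c : Set P → ℝ, (∀ J, 0 ≤ c J) ∧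
      (∀ J, c J ≠ 0 → IsLowerIdeal lt J ∧ J ∩ Pstar = K) ∧
      ∑ J, c J = 1 ∧ ∀ p, ∑ J, c J * ind (maxElems r J) p = x p} := by
    refine convexHull_min ?_ ?_
    · rintro x ⟨J, h1, h2, rfl⟩
      refine ⟨Pi.single J 1, fun J' => ?_, fun J' h => ?_, ?_, fun p => ?_⟩
      · rw [Pi.single_apply]; split_ifs <;> simp
      · have : J' = J := by
          by_contra h'; exact h (by simp [h'])
        subst this; exact ⟨h1, h2⟩
      · simp
      · simp [Pi.single_apply]
    · rintro x ⟨c, c1, c2, c3, c4⟩ y ⟨d, d1, d2, d3, d4⟩ a b ha hb hab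
      refine ⟨fun J => a * c J + b * d J, fun J => ?_, fun J h => ?_, ?_, fun p => ?_⟩
      · have := c1 J
        have := d1 J
        positivity
      · by_cases h1 : c J = 0
        · by_cases h2 : d J = 0
          · exact absurd (by simp [h1, h2]) h
          · exact d2 J h2
        · exact c2 J h1
      · rw [Finset.sum_add_distrib, ← Finset.mul_sum, ← Finset.mul_sum, c3, d3]; simpa using hab
      · simp only [add_mul, mul_assoc, Finset.sum_add_distrib, ← Finset.mul_sum, c4, d4]
        simp
  exact hsub hx

theorem inter_mem_idealsOn {P : Type*} (lt : P → P → Prop) (Pstar J : Set P)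
    (hJ : IsLowerIdeal lt J) : J ∩ Pstar ∈ idealsOn lt Pstar :=
  ⟨Set.inter_subset_right, fun _ _ hp _ h hq' => ⟨hJ h hq'.1, hp⟩⟩

theorem feas_of_mem {P : Type*} [Fintype P] (lt r : P → P → Prop) (Pstar : Set P)
    (α : Set P → ℕ) (hα : ∀ K : Set P, α K ≠ 0 → K ∈ idealsOn lt Pstar) (m : ℕ) (x : P → ℝ)
    (hx : x ∈ dilate m (RPPmarked lt r Pstar α)) :
    (Feas lt r Pstar (fun K => (m : ℝ) * α K) x).Nonempty := by
  classical
  obtain ⟨y, hy, rfl⟩ := hx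
  unfold RPPmarked at hy
  rw [Set.mem_finsetSum] at hy
  obtain ⟨g, hg, rfl⟩ := hy
  have : ∀ K, K ∈ idealsOn lt Pstar → ∃ c : Set P → ℝ, (∀ J, 0 ≤ c J) ∧
      (∀ J, c J ≠ 0 → IsLowerIdeal lt J ∧ J ∩ Pstar = K) ∧
      ∑ J, c J = 1 ∧ ∀ p, (α K : ℝ) * ∑ J, c J * ind (maxElems r J) p = g K p := by
    intro K hK
    obtain ⟨z, hz, hzg⟩ := hg (i := K) (by simpa using hK)
    obtain ⟨c, c1, c2, c3, c4⟩ := fund_mem lt r Pstar K z hz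
    refine ⟨c, c1, c2, c3, fun p => ?_⟩
    rw [c4, ← hzg]; simp
  choose! C C1 C2 C3 C4 using this
  refine ⟨fun J => m * α (J ∩ Pstar) * C (J ∩ Pstar) J, fun J => ?_, fun J hJ => ?_, fun K => ?_,
    fun p => ?_⟩
  · by_cases h : α (J ∩ Pstar) = 0
    · simp [h]
    · have := C1 _ (hα _ h) J
      positivity
  · by_cases h : α (J ∩ Pstar) = 0
    · simp [h]
    · by_cases h' : C (J ∩ Pstar) J = 0
      · simp [h']
      · exact absurd (C2 _ (hα _ h) J h').1 hJ
  · have e : ∀ J, (m:ℝ) * α (J ∩ Pstar) * C (J ∩ Pstar) J * (if J ∩ Pstar = K then 1 else 0)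
        = m * α K * C K J := by
      intro J
      by_cases h : J ∩ Pstar = K
      · simp [h]
      · by_cases ha : α K = 0
        · simp [h, ha]
        · have : C K J = 0 := by
            by_contra h'; exact h (C2 K (hα _ ha) J h').2
          simp [h, this]
    simp only [e, ← Finset.mul_sum]
    by_cases ha : α K = 0
    · simp [ha]
    · rw [C3 K (hα _ ha), mul_one]
  · have e : ∀ J, (m:ℝ) * α (J ∩ Pstar) * C (J ∩ Pstar) J * ind (maxElems r J) p
        = ∑ K ∈ (Set.toFinite (idealsOn lt Pstar)).toFinset,
          m * (α K * (C K J * ind (maxElems r J) p)) := by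
      intro J
      rw [Finset.sum_eq_single (J ∩ Pstar)]
      · ring
      · intro K hK hne
        have : C K J = 0 := by
          by_contra h'; exact hne (C2 K (by simpa using hK) J h').2.symm
        simp [this]
      · intro h
        have : α (J ∩ Pstar) = 0 := by
          by_contra h'; exact h (by simpa using hα _ h')
        simp [this]
    simp only [e]
    rw [Finset.sum_comm]
    simp only [← Finset.mul_sum, Pi.smul_apply, Finset.sum_apply, smul_eq_mul]
    congr 1
    refine Finset.sum_congr rfl fun K hK => C4 K (by simpa using hK) p

theorem mem_of_feas {P : Type*} [Fintype P] (lt r : P → P → Prop)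
    (hlttr : ∀ a b c, lt a b → lt b c → lt a c) (Pstar : Set P)
    (α : Set P → ℕ) (m : ℕ) (x : P → ℝ)
    (hx : (Feas lt r Pstar (fun K => (m : ℝ) * α K) x).Nonempty) :
    x ∈ dilate m (RPPmarked lt r Pstar α) := by
  classical
  obtain ⟨c, c0, cl, cK, cx⟩ := hx
  have hne : ∀ K, K ∈ idealsOn lt Pstar → (RPPfund lt r Pstar K).Nonempty := by
    intro K hK
    refine ⟨_, subset_convexHull ℝ _ ⟨genIdeal lt K, ?_, ?_, rfl⟩⟩
    · rintro p q hpq ⟨s, hs, rfl | h⟩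
      · exact ⟨_, hs, Or.inr hpq⟩
      · exact ⟨_, hs, Or.inr (hlttr _ _ _ hpq h)⟩
    · ext p
      constructor
      · rintro ⟨⟨s, hs, rfl | h⟩, hp⟩
        · exact hs
        · exact hK.2 _ _ hp (hK.1 hs) h hs
      · intro hp; exact ⟨⟨p, hp, Or.inl rfl⟩, hK.1 hp⟩
  have : ∀ K, K ∈ idealsOn lt Pstar → ∃ z ∈ RPPfund lt r Pstar K,
      ∀ p, ∑ J, c J * (if J ∩ Pstar = K then 1 else 0) * ind (maxElems r J) p
        = m * (α K * z p) := by
    intro K hK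
    have nn : ∀ J, 0 ≤ c J * (if J ∩ Pstar = K then (1:ℝ) else 0) := fun J => by
      have := c0 J; split_ifs <;> simp [this]
    by_cases h : (m:ℝ) * α K = 0
    · obtain ⟨z, hz⟩ := hne K hK
      refine ⟨z, hz, fun p => ?_⟩
      have h2 : ∑ J, c J * (if J ∩ Pstar = K then (1:ℝ) else 0) = m * α K := cK K
      rw [h, Finset.sum_eq_zero_iff_of_nonneg (fun J _ => nn J)] at h2
      rw [← mul_assoc, h, zero_mul]
      exact Finset.sum_eq_zero fun J hJ => by rw [h2 J hJ, zero_mul]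
    · have hpos : 0 < (m:ℝ) * α K := lt_of_le_of_ne (by positivity) (Ne.symm h)
      set w : Set P → ℝ := fun J => c J * (if J ∩ Pstar = K then 1 else 0) / (m * α K) with hw
      have hwn : ∀ J, 0 ≤ w J := fun J => div_nonneg (nn J) hpos.le
      have hw1 : ∑ J, w J = 1 := by
        rw [hw, ← Finset.sum_div, cK, div_self h]
      obtain ⟨z0, hz0⟩ := hne K hK
      refine ⟨∑ J, w J • (if w J = 0 then z0 else ind (maxElems r J)), ?_, fun p => ?_⟩
      · refine (convex_convexHull ℝ _).sum_mem (fun J _ => hwn J) hw1 fun J _ => ?_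
        by_cases h0 : w J = 0
        · rw [if_pos h0]; exact hz0
        · rw [if_neg h0]
          refine subset_convexHull ℝ _ ⟨J, ?_, ?_, rfl⟩
          · by_contra h'; exact h0 (by simp [hw, cl J h'])
          · by_contra h'; exact h0 (by simp [hw, h'])
      · simp only [Finset.sum_apply, Pi.smul_apply, smul_eq_mul]
        rw [← mul_assoc, Finset.mul_sum]
        refine Finset.sum_congr rfl fun J _ => ?_
        have e : c J * (if J ∩ Pstar = K then (1:ℝ) else 0) = m * α K * w J := by
          exact (mul_div_cancel₀ _ h).symm
        rw [e]
        by_cases h0 : w J = 0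
        · simp [h0]
        · rw [if_neg h0]; ring
  choose! z hz hzp using this
  refine ⟨∑ K ∈ (Set.toFinite (idealsOn lt Pstar)).toFinset, (α K : ℝ) • z K, ?_, ?_⟩
  · exact Set.finsetSum_mem_finsetSum _ _ _ fun K hK => ⟨z K, hz K (by simpa using hK), rfl⟩
  · funext p
    simp only [Pi.smul_apply, Finset.sum_apply, smul_eq_mul, Finset.mul_sum]
    rw [← cx p, Finset.sum_congr rfl fun K hK => (hzp K (by simpa using hK) p).symm,
      Finset.sum_comm]
    refine Finset.sum_congr rfl fun J _ => ?_
    by_cases hJ : IsLowerIdeal lt J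
    · rw [Finset.sum_eq_single (J ∩ Pstar)]
      · simp
      · intro K _ hne; simp [hne.symm]
      · intro h; exact absurd (by simpa using inter_mem_idealsOn lt Pstar J hJ) h
    · simp [cl J hJ]

open Classical in
/-- Chains of ideals with multiplicities and prescribed traces on `Pstar`. -/
def Chains {P : Type*} [Fintype P] (lt : P → P → Prop) (Pstar : Set P) (α : Set P → ℕ) (m : ℕ) :
    Set (Set P → ℕ) :=
  {n | (∀ J, n J ≠ 0 → IsLowerIdeal lt J ∧ J.Nonempty) ∧
    (∀ J1 J2, n J1 ≠ 0 → n J2 ≠ 0 → J1 ⊆ J2 ∨ J2 ⊆ J1) ∧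
    ∀ K, ∑ J, (n J : ℝ) * (if J ∩ Pstar = K then 1 else 0) = m * α K}

open Classical in
theorem card_chains {P : Type*} [Fintype P] (lt r : P → P → Prop)
    (hlttr : ∀ a b c, lt a b → lt b c → lt a c)
    (hirr : ∀ p, ¬ r p p) (htr : ∀ a b c, r a b → r b c → r a c)
    (hweak : ∀ p q, r p q → lt p q)
    (hstar : ∀ J1 J2 : Set P, IsLowerIdeal lt J1 → IsLowerIdeal lt J2 →
      IsLowerIdeal lt (starOp r J1 J2))
    (Pstar : Set P) (hiii : ∀ p ∈ Pstar, ∀ q : P, ¬ r p q) (α : Set P → ℕ)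
    (hαsupp : ∀ K : Set P, α K ≠ 0 → K ∈ idealsOn lt Pstar ∧ K.Nonempty)
    (hαchain : ∀ K1 K2 : Set P, α K1 ≠ 0 → α K2 ≠ 0 → K1 ⊆ K2 ∨ K2 ⊆ K1) (m : ℕ) :
    Nat.card {x : P → ℤ // (fun p => (x p : ℝ)) ∈ dilate m (RPPmarked lt r Pstar α)}
      = Nat.card (Chains lt Pstar α m) := by
  symm
  have hcast : ∀ (n : Set P → ℕ) (p : P),
      ((∑ J, (n J : ℤ) * (if p ∈ maxElems r J then 1 else 0) : ℤ) : ℝ)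
        = ∑ J, (n J : ℝ) * ind (maxElems r J) p := by
    intro n p
    push_cast
    refine Finset.sum_congr rfl fun J _ => ?_
    simp [ind, Set.indicator_apply]
  refine Nat.card_eq_of_bijective (fun n => ⟨fun p => ∑ J, (n.1 J : ℤ) *
    (if p ∈ maxElems r J then 1 else 0), ?_⟩) ⟨?_, ?_⟩
  · obtain ⟨n, n1, n2, n3⟩ := n
    refine mem_of_feas lt r hlttr Pstar α m _ ⟨fun J => n J, fun J => by positivity,
      fun J hJ => ?_, n3, fun p => (hcast n p).symm⟩
    by_contra h
    exact hJ (n1 J (by simpa using h)).1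
  · rintro ⟨n, n1, n2, n3⟩ ⟨n', n1', n2', n3'⟩ h
    have h := congrArg Subtype.val h
    apply Subtype.ext
    refine chain_unique r hirr htr _ n n' rfl
      (fun J h => ⟨fun p q hpq hq => (n1 J h).1 (hweak _ _ hpq) hq, (n1 J h).2⟩) n2
      (fun J h => ⟨fun p q hpq hq => (n1' J h).1 (hweak _ _ hpq) hq, (n1' J h).2⟩) n2' fun p => ?_
    have := congrFun h p
    rw [← hcast, ← hcast]
    exact congrArg _ this
  · rintro ⟨x, hx⟩
    obtain ⟨c, ⟨c0, cl, cK, cx⟩, hch⟩ := feas_chain lt r hirr htr hweak hstar Pstar hiii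
      (fun K => (m : ℝ) * α K)
      (fun K1 K2 h1 h2 => hαchain K1 K2 (fun h => h1 (by simp [h])) (fun h => h2 (by simp [h])))
      _ (feas_of_mem lt r Pstar α (fun K h => (hαsupp K h).1) m _ hx)
    have hlow : ∀ J, c J ≠ 0 → IsLowerIdeal lt J ∧ J.Nonempty := by
      intro J hJ
      refine ⟨by by_contra h; exact hJ (cl J h), ?_⟩
      have : α (J ∩ Pstar) ≠ 0 := by
        intro h
        have h2 := cK (J ∩ Pstar)
        simp only [h, Nat.cast_zero, mul_zero] at h2
        rw [Finset.sum_eq_zero_iff_of_nonneg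
          (fun J' _ => by have := c0 J'; split_ifs <;> simp [this])] at h2
        simpa [hJ] using h2 J (Finset.mem_univ J)
      exact (hαsupp _ this).2.mono Set.inter_subset_left
    have hint := chain_int r hirr htr c
      (fun J h => ⟨fun p q hpq hq => (hlow J h).1 (hweak _ _ hpq) hq, (hlow J h).2⟩) hch x cx
    have hnat : ∀ J, ∃ n : ℕ, c J = n := by
      intro J
      obtain ⟨z, hz⟩ := hint J
      have : 0 ≤ z := by have := c0 J; rw [hz] at this; exact_mod_cast this
      exact ⟨z.toNat, by rw [hz]; exact_mod_cast (Int.toNat_of_nonneg this).symm⟩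
    choose n hn using hnat
    obtain rfl : c = fun J => (n J : ℝ) := funext hn
    refine ⟨⟨n, fun J h => hlow J (by simpa using h),
      fun J1 J2 h1 h2 => hch J1 J2 (by simpa using h1) (by simpa using h2), cK⟩, ?_⟩
    apply Subtype.ext
    funext p
    have := (hcast n p).trans (cx p)
    exact Int.cast_injective (α := ℝ) this

/-- If `lt'` and `lt''` are two partial orders weaker than `lt`, both satisfying the
closure and maximality conditions of the marked setup, then for every nonnegative dominant
marking `λ` (with decomposition coefficients `α`) and every `m ≥ 0`, the dilations
`m·R_λ(P, lt, lt')` and `m·R_λ(P, lt, lt'')` contain the same number of integer points. -/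
theorem stmt16 {P : Type*} [Fintype P] (lt lt' lt'' : P → P → Prop)
    (hltirr : ∀ p, ¬ lt p p) (hlttr : ∀ a b c, lt a b → lt b c → lt a c)
    (hlt'irr : ∀ p, ¬ lt' p p) (hlt'tr : ∀ a b c, lt' a b → lt' b c → lt' a c)
    (hlt''irr : ∀ p, ¬ lt'' p p) (hlt''tr : ∀ a b c, lt'' a b → lt'' b c → lt'' a c)
    (hweak' : ∀ p q, lt' p q → lt p q)
    (hweak'' : ∀ p q, lt'' p q → lt p q)
    (hstar' : ∀ J1 J2 : Set P, IsLowerIdeal lt J1 → IsLowerIdeal lt J2 →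
      IsLowerIdeal lt (starOp lt' J1 J2))
    (hstar'' : ∀ J1 J2 : Set P, IsLowerIdeal lt J1 → IsLowerIdeal lt J2 →
      IsLowerIdeal lt (starOp lt'' J1 J2))
    (Pstar : Set P)
    (hmin : ∀ p : P, (∀ q, ¬ lt q p) → p ∈ Pstar)
    (hmax : ∀ p : P, (∀ q, ¬ lt p q) → p ∈ Pstar)
    (hiii' : ∀ p ∈ Pstar, ∀ q : P, ¬ lt' p q)
    (hiii'' : ∀ p ∈ Pstar, ∀ q : P, ¬ lt'' p q)
    (lam : P → ℤ) (α : Set P → ℕ)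
    (hlamnn : ∀ p ∈ Pstar, 0 ≤ lam p)
    (hdom : ∀ p q : P, p ∈ Pstar → q ∈ Pstar → lt p q → lam q ≤ lam p)
    (hαsupp : ∀ K : Set P, α K ≠ 0 → K ∈ idealsOn lt Pstar ∧ K.Nonempty)
    (hαchain : ∀ K1 K2 : Set P, α K1 ≠ 0 → α K2 ≠ 0 → K1 ⊆ K2 ∨ K2 ⊆ K1)
    (hαsum : ∀ p ∈ Pstar, lam p =
      ∑ K ∈ (Set.toFinite (idealsOn lt Pstar)).toFinset, (α K : ℤ) * K.indicator 1 p)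
    (m : ℕ) :
    Nat.card {x : P → ℤ // (fun p => (x p : ℝ)) ∈ dilate m (RPPmarked lt lt' Pstar α)} =
    Nat.card {x : P → ℤ // (fun p => (x p : ℝ)) ∈ dilate m (RPPmarked lt lt'' Pstar α)} := by
  rw [card_chains lt lt' hlttr hlt'irr hlt'tr hweak' hstar' Pstar hiii' α hαsupp hαchain m,
    card_chains lt lt'' hlttr hlt''irr hlt''tr hweak'' hstar'' Pstar hiii'' α hαsupp hαchain m]
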